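/- In the Golub–Kahan bidiagonalization setup, fix k with 1 ≤ k ≤ n−1 and let (θ̃_1^{(k)})² > (θ̃_2^{(k)})² > ⋯ > (θ̃_k^{(k)})² be the singular values of the (k+1)×k matrix M_k obtained by stacking the row α_{k+1}β_{k+1}(e_k^{(k)})ᵀ below B_kᵀB_k, where e_k^{(k)} is the last standard basis vector of ℝ^k. Let θ_1^{(k)} > ⋯ > θ_k^{(k)} be the singular values of B_k. Then for every i with 1 ≤ i ≤ k one has θ_i^{(k)} < θ̃_i^{(k)} < σ_i. -/

import Mathlib

open Matrix

/-- Spectral norm (largest singular value) of a real matrix. -/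
noncomputable def specNorm {a b : ℕ} (M : Matrix (Fin a) (Fin b) ℝ) : ℝ :=
  ‖LinearMap.toContinuousLinearMap (Matrix.toEuclideanLin M)‖

/-- The `j`-th largest singular value of a real matrix (`j ≥ 1`), characterized via the
Eckart–Young theorem as the minimal spectral-norm distance to matrices of rank `< j`;
it is `0` when `j` exceeds the smaller dimension. -/
noncomputable def singVal {a b : ℕ} (M : Matrix (Fin a) (Fin b) ℝ) (j : ℕ) : ℝ :=
  sInf {r : ℝ | ∃ D : Matrix (Fin a) (Fin b) ℝ, D.rank < j ∧ r = specNorm (M - D)}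

/-- The matrix of the first `k` columns of `M`. -/
def colSub {a b : ℕ} (M : Matrix (Fin a) (Fin b) ℝ) (k : ℕ) (hk : k ≤ b) :
    Matrix (Fin a) (Fin k) ℝ :=
  M.submatrix id fun j => ⟨j.1, lt_of_lt_of_le j.2 hk⟩

/-- The leading `r × c` submatrix of `M`. -/
def subUL {a b : ℕ} (M : Matrix (Fin a) (Fin b) ℝ) (r c : ℕ) (hr : r ≤ a) (hc : c ≤ b) :
    Matrix (Fin r) (Fin c) ℝ :=
  M.submatrix (fun i => ⟨i.1, lt_of_lt_of_le i.2 hr⟩) (fun j => ⟨j.1, lt_of_lt_of_le j.2 hc⟩)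

/-!
The proof compares singular values through Courant–Fischer test vectors. By orthogonal invariance
`A` may be replaced by the bidiagonal `B`, and `M_k` is the leading `(k + 1) × k` block of `BᵀB`,
whose first `k` rows form `CᵀC` with `C = B_k`. Hence `‖CᵀC x‖ ≤ ‖M_k x‖ ≤ ‖BᵀB (x, 0)‖`, which
gives `σ_i(C)² ≤ σ_i(M_k) ≤ σ_i(B)²`.

If either inequality were an equality, dimension counting would produce a nonzero `x` on which the
whole chain of estimates is tight, and expanding `‖TᵀT y - s² y‖²` forces `y` to be an eigenvector
of `TᵀT` (`T = C`, `y = x` on the left; `T = B`, `y = (x, 0)` on the right). Both times this says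
that `M_k x` equals `(μ x, 0)` for some `μ`. But `M_k` is upper Hessenberg with nonzero
subdiagonal, so back substitution from the last row shows `x = 0`.
-/

section SingularValues

open Module (finrank)
open LinearMap (adjoint)

variable {𝕜 E E' F F' : Type*} [RCLike 𝕜]
  [NormedAddCommGroup E] [InnerProductSpace 𝕜 E] [FiniteDimensional 𝕜 E]
  [NormedAddCommGroup E'] [InnerProductSpace 𝕜 E'] [FiniteDimensional 𝕜 E']
  [NormedAddCommGroup F] [InnerProductSpace 𝕜 F] [FiniteDimensional 𝕜 F]
  [NormedAddCommGroup F'] [InnerProductSpace 𝕜 F'] [FiniteDimensional 𝕜 F']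

/-- An orthonormal basis of right singular vectors of `T`; the `j`-th vector belongs to
`T.singularValues j`. -/
noncomputable def rightSingularBasis (T : E →ₗ[𝕜] F) :
    OrthonormalBasis (Fin (finrank 𝕜 E)) 𝕜 E :=
  T.isSymmetric_adjoint_comp_self.eigenvectorBasis rfl

lemma rightSingularBasis_repr_adjoint_apply (T : E →ₗ[𝕜] F) (x : E) (j : Fin (finrank 𝕜 E)) :
    (rightSingularBasis T).repr (adjoint T (T x)) j =
      ((T.singularValues j ^ 2 : ℝ) : 𝕜) * (rightSingularBasis T).repr x j := by
  rw [T.sq_singularValues_fin rfl]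
  exact T.isSymmetric_adjoint_comp_self.eigenvectorBasis_apply_self_apply rfl x j

lemma norm_sq_eq_sum_rightSingularBasis (T : E →ₗ[𝕜] F) (x : E) :
    ‖x‖ ^ 2 = ∑ j : Fin (finrank 𝕜 E), ‖(rightSingularBasis T).repr x j‖ ^ 2 := by
  rw [← (rightSingularBasis T).repr.norm_map, EuclideanSpace.norm_sq_eq]

lemma norm_sq_adjoint_apply_eq_sum (T : E →ₗ[𝕜] F) (x : E) :
    ‖adjoint T (T x)‖ ^ 2 =
      ∑ j : Fin (finrank 𝕜 E), (T.singularValues j ^ 2) ^ 2 *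
        ‖(rightSingularBasis T).repr x j‖ ^ 2 := by
  rw [norm_sq_eq_sum_rightSingularBasis T]
  refine Finset.sum_congr rfl fun j _ => ?_
  rw [rightSingularBasis_repr_adjoint_apply, norm_mul, RCLike.norm_ofReal, mul_pow, sq_abs]

lemma norm_sq_apply_eq_sum (T : E →ₗ[𝕜] F) (x : E) :
    ‖T x‖ ^ 2 =
      ∑ j : Fin (finrank 𝕜 E), T.singularValues j ^ 2 * ‖(rightSingularBasis T).repr x j‖ ^ 2 := by
  rw [← inner_self_eq_norm_sq (𝕜 := 𝕜), ← LinearMap.adjoint_inner_left,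
    ← (rightSingularBasis T).repr.inner_map_map, PiLp.inner_apply, map_sum]
  refine Finset.sum_congr rfl fun j _ => ?_
  rw [rightSingularBasis_repr_adjoint_apply, ← smul_eq_mul, inner_smul_left, RCLike.conj_ofReal,
    RCLike.re_ofReal_mul, inner_self_eq_norm_sq]

/-- The span of the first `i` right singular vectors of `T`, which is all of `E` once
`finrank 𝕜 E ≤ i`. -/
noncomputable def rightSingularSubspace (T : E →ₗ[𝕜] F) (i : ℕ) : Submodule 𝕜 E :=
  Submodule.span 𝕜 (rightSingularBasis T '' {j | (j : ℕ) < i})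

lemma finrank_rightSingularSubspace (T : E →ₗ[𝕜] F) (i : ℕ) :
    finrank 𝕜 (rightSingularSubspace T i) = min (finrank 𝕜 E) i := by
  classical
  have hli := (rightSingularBasis T).orthonormal.linearIndependent
  rw [rightSingularSubspace, finrank_span_set_eq_card (hli.linearIndepOn _).id_image,
    Set.toFinset_image, Finset.card_image_of_injective _ hli.injective, Set.toFinset_ofPred,
    Fin.card_filter_val_lt]

lemma rightSingularBasis_repr_eq_zero_of_mem {T : E →ₗ[𝕜] F} {i : ℕ} {x : E}
    (hx : x ∈ rightSingularSubspace T i) {j : Fin (finrank 𝕜 E)} (hj : i ≤ j) :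
    (rightSingularBasis T).repr x j = 0 := by
  rw [rightSingularSubspace, ← OrthonormalBasis.coe_toBasis, Module.Basis.mem_span_image] at hx
  by_contra h
  exact (hx (Finsupp.mem_support_iff.2 h)).not_ge hj

lemma rightSingularBasis_repr_eq_zero_of_mem_orthogonal {T : E →ₗ[𝕜] F} {i : ℕ} {x : E}
    (hx : x ∈ (rightSingularSubspace T i)ᗮ) {j : Fin (finrank 𝕜 E)} (hj : j < i) :
    (rightSingularBasis T).repr x j = 0 := by
  rw [OrthonormalBasis.repr_apply_apply]
  exact hx _ (Submodule.subset_span ⟨j, hj, rfl⟩)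

lemma singularValues_mul_norm_le_norm_apply {T : E →ₗ[𝕜] F} {i : ℕ} {x : E}
    (hx : x ∈ rightSingularSubspace T (i + 1)) : T.singularValues i * ‖x‖ ≤ ‖T x‖ := by
  apply le_of_sq_le_sq _ (norm_nonneg _)
  rw [mul_pow, norm_sq_eq_sum_rightSingularBasis T, norm_sq_apply_eq_sum, Finset.mul_sum]
  refine Finset.sum_le_sum fun j _ => ?_
  rcases Nat.lt_or_ge i j with hij | hji
  · simp [rightSingularBasis_repr_eq_zero_of_mem hx hij]
  · gcongr
    exacts [T.singularValues_nonneg i, T.singularValues_antitone hji]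

lemma norm_apply_le_singularValues_mul_norm {T : E →ₗ[𝕜] F} {i : ℕ} {x : E}
    (hx : x ∈ (rightSingularSubspace T i)ᗮ) : ‖T x‖ ≤ T.singularValues i * ‖x‖ := by
  apply le_of_sq_le_sq _ (mul_nonneg (T.singularValues_nonneg i) (norm_nonneg _))
  rw [mul_pow, norm_sq_eq_sum_rightSingularBasis T, norm_sq_apply_eq_sum, Finset.mul_sum]
  refine Finset.sum_le_sum fun j _ => ?_
  rcases Nat.lt_or_ge j i with hji | hij
  · simp [rightSingularBasis_repr_eq_zero_of_mem_orthogonal hx hji]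
  · gcongr
    exacts [T.singularValues_nonneg j, T.singularValues_antitone hij]

lemma norm_adjoint_apply_le_singularValues_mul_norm_apply {T : E →ₗ[𝕜] F} {i : ℕ} {x : E}
    (hx : x ∈ (rightSingularSubspace T i)ᗮ) :
    ‖adjoint T (T x)‖ ≤ T.singularValues i * ‖T x‖ := by
  apply le_of_sq_le_sq _ (mul_nonneg (T.singularValues_nonneg i) (norm_nonneg _))
  rw [mul_pow, norm_sq_adjoint_apply_eq_sum, norm_sq_apply_eq_sum, Finset.mul_sum]
  refine Finset.sum_le_sum fun j _ => ?_
  rcases Nat.lt_or_ge j i with hji | hij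
  · simp [rightSingularBasis_repr_eq_zero_of_mem_orthogonal hx hji]
  · rw [sq (T.singularValues j ^ 2), mul_assoc]
    gcongr
    exacts [T.singularValues_nonneg j, T.singularValues_antitone hij]

lemma exists_mem_ne_zero_apply_eq_zero {K V W : Type*} [DivisionRing K] [AddCommGroup V]
    [Module K V] [AddCommGroup W] [Module K W] {U : Submodule K V} [FiniteDimensional K U]
    {L : V →ₗ[K] W} [FiniteDimensional K L.range]
    (h : finrank K L.range < finrank K U) : ∃ x ∈ U, x ≠ 0 ∧ L x = 0 := by
  have hker : (L.rangeRestrict.domRestrict U).ker ≠ ⊥ := LinearMap.ker_ne_bot_of_finrank_lt h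
  obtain ⟨⟨x, hxU⟩, hLx, hx⟩ := Submodule.exists_mem_ne_zero_of_ne_bot hker
  exact ⟨x, hxU, fun h0 => hx (Subtype.ext h0), congrArg Subtype.val (LinearMap.mem_ker.1 hLx)⟩

lemma exists_mem_rightSingularSubspace_map_mem_orthogonal (M : E' →ₗ[𝕜] F') (T : E →ₗ[𝕜] F)
    (J : E' →ₗ[𝕜] E) {i : ℕ} (hi : i < finrank 𝕜 E') :
    ∃ x ∈ rightSingularSubspace M (i + 1), x ≠ 0 ∧ J x ∈ (rightSingularSubspace T i)ᗮ := by
  set U := rightSingularSubspace T i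
  have hrank : finrank 𝕜 (U.starProjection.toLinearMap ∘ₗ J).range ≤ i := calc
    _ ≤ finrank 𝕜 U := Submodule.finrank_mono
      ((LinearMap.range_comp_le_range _ _).trans_eq U.range_starProjection)
    _ ≤ i := (finrank_rightSingularSubspace T i).trans_le (min_le_right _ _)
  have hlt : finrank 𝕜 (U.starProjection.toLinearMap ∘ₗ J).range <
      finrank 𝕜 (rightSingularSubspace M (i + 1)) := by
    rw [finrank_rightSingularSubspace, min_eq_right hi]
    omega
  obtain ⟨x, hx, hx0, hUx⟩ := exists_mem_ne_zero_apply_eq_zero hlt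
  exact ⟨x, hx, hx0, (Submodule.starProjection_apply_eq_zero_iff _).1 hUx⟩

theorem singularValues_le_of_norm_apply_le {M : E' →ₗ[𝕜] F'} {T : E →ₗ[𝕜] F} {J : E' →ₗ[𝕜] E}
    (hJ : ∀ x, ‖J x‖ ≤ ‖x‖) (h : ∀ x, ‖M x‖ ≤ ‖T (J x)‖) (i : ℕ) :
    M.singularValues i ≤ T.singularValues i := by
  rcases Nat.lt_or_ge i (finrank 𝕜 E') with hi | hi
  · obtain ⟨x, hxM, hx0, hxT⟩ := exists_mem_rightSingularSubspace_map_mem_orthogonal M T J hi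
    refine le_of_mul_le_mul_right ?_ (norm_pos_iff.2 hx0)
    calc M.singularValues i * ‖x‖ ≤ ‖M x‖ := singularValues_mul_norm_le_norm_apply hxM
      _ ≤ ‖T (J x)‖ := h x
      _ ≤ T.singularValues i * ‖J x‖ := norm_apply_le_singularValues_mul_norm hxT
      _ ≤ T.singularValues i * ‖x‖ := by gcongr; exacts [T.singularValues_nonneg i, hJ x]
  · rw [M.singularValues_of_finrank_le hi]
    exact T.singularValues_nonneg i

lemma singularValues_le_norm_sub (T D : E →ₗ[𝕜] F) {i : ℕ} (hD : finrank 𝕜 D.range ≤ i) :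
    T.singularValues i ≤ ‖LinearMap.toContinuousLinearMap (T - D)‖ := by
  rcases Nat.lt_or_ge i (finrank 𝕜 E) with hi | hi
  · have hlt : finrank 𝕜 D.range < finrank 𝕜 (rightSingularSubspace T (i + 1)) := by
      rw [finrank_rightSingularSubspace, min_eq_right hi]
      omega
    obtain ⟨x, hx, hx0, hDx⟩ := exists_mem_ne_zero_apply_eq_zero hlt
    refine le_of_mul_le_mul_right ?_ (norm_pos_iff.2 hx0)
    calc T.singularValues i * ‖x‖ ≤ ‖T x‖ := singularValues_mul_norm_le_norm_apply hx
      _ = ‖(T - D) x‖ := by rw [LinearMap.sub_apply, hDx, sub_zero]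
      _ ≤ _ := (LinearMap.toContinuousLinearMap (T - D)).le_opNorm x
  · rw [T.singularValues_of_finrank_le hi]
    exact norm_nonneg _

lemma norm_sub_comp_starProjection_le (T : E →ₗ[𝕜] F) (i : ℕ) :
    ‖LinearMap.toContinuousLinearMap
        (T - T ∘ₗ (rightSingularSubspace T i).starProjection.toLinearMap)‖ ≤
      T.singularValues i := by
  set U := rightSingularSubspace T i
  refine ContinuousLinearMap.opNorm_le_bound _ (T.singularValues_nonneg i) fun x => ?_
  have hx : Uᗮ.starProjection x = x - U.starProjection x :=
    Submodule.starProjection_orthogonal_val x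
  calc _ = ‖T (Uᗮ.starProjection x)‖ := by rw [hx, T.map_sub]; rfl
    _ ≤ T.singularValues i * ‖Uᗮ.starProjection x‖ :=
      norm_apply_le_singularValues_mul_norm (Submodule.starProjection_apply_mem _ x)
    _ ≤ T.singularValues i * ‖x‖ := by
      gcongr
      exacts [T.singularValues_nonneg i, Uᗮ.norm_starProjection_apply_le x]

theorem isLeast_norm_sub_singularValues (T : E →ₗ[𝕜] F) (i : ℕ) :
    IsLeast {r | ∃ D : E →ₗ[𝕜] F, finrank 𝕜 D.range ≤ i ∧
      r = ‖LinearMap.toContinuousLinearMap (T - D)‖} (T.singularValues i) := by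
  set U := rightSingularSubspace T i
  have hrank : finrank 𝕜 (T ∘ₗ U.starProjection.toLinearMap).range ≤ i := calc
    _ ≤ finrank 𝕜 U := by
      rw [LinearMap.range_comp, U.range_starProjection]
      exact Submodule.finrank_map_le T U
    _ ≤ i := (finrank_rightSingularSubspace T i).trans_le (min_le_right _ _)
  refine ⟨⟨_, hrank, le_antisymm (singularValues_le_norm_sub T _ hrank)
    (norm_sub_comp_starProjection_le T i)⟩, ?_⟩
  rintro _ ⟨D, hD, rfl⟩
  exact singularValues_le_norm_sub T D hD

lemma norm_sq_adjoint_apply_sub_smul (T : E →ₗ[𝕜] F) (c : ℝ) (x : E) :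
    ‖adjoint T (T x) - (c : 𝕜) • x‖ ^ 2 =
      ‖adjoint T (T x)‖ ^ 2 - 2 * c * ‖T x‖ ^ 2 + c ^ 2 * ‖x‖ ^ 2 := by
  rw [norm_sub_sq (𝕜 := 𝕜), inner_smul_right, LinearMap.adjoint_inner_left, RCLike.re_ofReal_mul,
    inner_self_eq_norm_sq, norm_smul, RCLike.norm_ofReal, mul_pow, sq_abs]
  ring

theorem sq_singularValues_lt_singularValues {T : E →ₗ[𝕜] F} {M : E →ₗ[𝕜] F'}
    (h : ∀ x, ‖adjoint T (T x)‖ ≤ ‖M x‖)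
    (heig : ∀ (μ : ℝ) (x : E), adjoint T (T x) = (μ : 𝕜) • x → ‖M x‖ ≤ ‖adjoint T (T x)‖ → x = 0)
    {i : ℕ} (hi : i < finrank 𝕜 E) : T.singularValues i ^ 2 < M.singularValues i := by
  by_contra! hle
  obtain ⟨x, hxT, hx0, hxM⟩ := exists_mem_rightSingularSubspace_map_mem_orthogonal T M .id hi
  set s := T.singularValues i
  have hs : 0 ≤ s := T.singularValues_nonneg i
  have hTx : s * ‖x‖ ≤ ‖T x‖ := singularValues_mul_norm_le_norm_apply hxT
  have hMx : ‖M x‖ ≤ s ^ 2 * ‖x‖ := calc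
    ‖M x‖ ≤ M.singularValues i * ‖x‖ := norm_apply_le_singularValues_mul_norm hxM
    _ ≤ s ^ 2 * ‖x‖ := by gcongr
  have hdefect : ‖adjoint T (T x) - ((s ^ 2 : ℝ) : 𝕜) • x‖ ^ 2 ≤ 0 := calc
    _ = ‖adjoint T (T x)‖ ^ 2 - 2 * s ^ 2 * ‖T x‖ ^ 2 + (s ^ 2) ^ 2 * ‖x‖ ^ 2 :=
      norm_sq_adjoint_apply_sub_smul T _ x
    _ ≤ (s ^ 2 * ‖x‖) ^ 2 - 2 * s ^ 2 * (s * ‖x‖) ^ 2 + (s ^ 2) ^ 2 * ‖x‖ ^ 2 := by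
      gcongr
      exact (h x).trans hMx
    _ = 0 := by ring
  have hx : adjoint T (T x) = ((s ^ 2 : ℝ) : 𝕜) • x := by
    rwa [← sub_eq_zero, ← norm_eq_zero, ← sq_nonpos_iff]
  refine hx0 (heig _ x hx (hMx.trans_eq ?_))
  rw [hx, norm_smul, RCLike.norm_ofReal, abs_of_nonneg (sq_nonneg s)]

theorem singularValues_lt_sq_singularValues {T : E →ₗ[𝕜] F} {M : E' →ₗ[𝕜] F'} {J : E' →ₗ[𝕜] E}
    (hJ : ∀ x, ‖J x‖ ≤ ‖x‖) (h : ∀ x, ‖M x‖ ≤ ‖adjoint T (T (J x))‖)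
    (heig : ∀ (μ : ℝ) (x : E'), adjoint T (T (J x)) = (μ : 𝕜) • J x → x = 0)
    {i : ℕ} (hi : i < finrank 𝕜 E') : M.singularValues i < T.singularValues i ^ 2 := by
  by_contra! hle
  obtain ⟨x, hxM, hx0, hxT⟩ := exists_mem_rightSingularSubspace_map_mem_orthogonal M T J hi
  set s := T.singularValues i
  have hTx : ‖adjoint T (T (J x))‖ ≤ s * ‖T (J x)‖ :=
    norm_adjoint_apply_le_singularValues_mul_norm_apply hxT
  have hMx : s ^ 2 * ‖J x‖ ≤ ‖adjoint T (T (J x))‖ := calc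
    s ^ 2 * ‖J x‖ ≤ s ^ 2 * ‖x‖ := by gcongr; exact hJ x
    _ ≤ M.singularValues i * ‖x‖ := by gcongr
    _ ≤ ‖M x‖ := singularValues_mul_norm_le_norm_apply hxM
    _ ≤ _ := h x
  have hdefect : ‖adjoint T (T (J x)) - ((s ^ 2 : ℝ) : 𝕜) • J x‖ ^ 2 ≤ 0 := calc
    _ = ‖adjoint T (T (J x))‖ ^ 2 - 2 * (s * ‖T (J x)‖) ^ 2 + (s ^ 2 * ‖J x‖) ^ 2 := by
      rw [norm_sq_adjoint_apply_sub_smul]; ring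
    _ ≤ ‖adjoint T (T (J x))‖ ^ 2 - 2 * ‖adjoint T (T (J x))‖ ^ 2 +
        ‖adjoint T (T (J x))‖ ^ 2 := by gcongr
    _ = 0 := by ring
  refine hx0 (heig (s ^ 2) x ?_)
  rwa [← sub_eq_zero, ← norm_eq_zero, ← sq_nonpos_iff]

end SingularValues

section EuclideanMatrices

lemma adjoint_toEuclideanLin_apply {ι κ : Type*} [Fintype ι] [Fintype κ] [DecidableEq κ]
    (M : Matrix ι κ ℝ) (x : EuclideanSpace ℝ κ) :
    (toEuclideanLin M).adjoint (toEuclideanLin M x) = toEuclideanLin (Mᵀ * M) x := by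
  classical
  rw [← toEuclideanLin_conjTranspose_eq_adjoint, conjTranspose_eq_transpose_of_trivial,
    toLpLin_mul_same, LinearMap.comp_apply]

lemma norm_toEuclideanLin_of_transpose_mul_self {ι κ : Type*} [Fintype ι] [Fintype κ]
    [DecidableEq κ] {P : Matrix ι κ ℝ} (hP : Pᵀ * P = 1) (x : EuclideanSpace ℝ κ) :
    ‖toEuclideanLin P x‖ = ‖x‖ := by
  have hadj : (toEuclideanLin P).adjoint (toEuclideanLin P x) = x := by
    rw [adjoint_toEuclideanLin_apply, hP, toLpLin_one, LinearMap.id_apply]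
  rw [← sq_eq_sq₀ (norm_nonneg _) (norm_nonneg _), ← real_inner_self_eq_norm_sq,
    ← LinearMap.adjoint_inner_left, hadj, real_inner_self_eq_norm_sq]

lemma norm_toEuclideanLin_transpose_le {ι κ : Type*} [Fintype ι] [DecidableEq ι] [Fintype κ]
    [DecidableEq κ] {P : Matrix ι κ ℝ} (hP : Pᵀ * P = 1) (x : EuclideanSpace ℝ ι) :
    ‖toEuclideanLin Pᵀ x‖ ≤ ‖x‖ := by
  set y := toEuclideanLin Pᵀ x with hy
  have hsq : ‖y‖ * ‖y‖ ≤ ‖x‖ * ‖y‖ := calc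
    ‖y‖ * ‖y‖ = inner ℝ x (toEuclideanLin P y) := by
      rw [← LinearMap.adjoint_inner_left, ← toEuclideanLin_conjTranspose_eq_adjoint,
        conjTranspose_eq_transpose_of_trivial, ← hy, real_inner_self_eq_norm_mul_norm]
    _ ≤ ‖x‖ * ‖toEuclideanLin P y‖ := real_inner_le_norm _ _
    _ = ‖x‖ * ‖y‖ := by rw [norm_toEuclideanLin_of_transpose_mul_self hP]
  rcases (norm_nonneg y).eq_or_lt with hy0 | hy0
  · exact hy0.symm.trans_le (norm_nonneg x)
  · exact le_of_mul_le_mul_right hsq hy0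

lemma singVal_succ_eq_singularValues {a b : ℕ} (M : Matrix (Fin a) (Fin b) ℝ) (i : ℕ) :
    singVal M (i + 1) = (toEuclideanLin M).singularValues i := by
  refine Eq.trans (congrArg sInf ?_) (isLeast_norm_sub_singularValues (toEuclideanLin M) i).csInf_eq
  ext r
  refine toEuclideanLin.toEquiv.exists_congr fun D => ?_
  rw [rank_eq_finrank_range_toLin D (EuclideanSpace.basisFun _ ℝ).toBasis
      (EuclideanSpace.basisFun _ ℝ).toBasis, ← toEuclideanLin_eq_toLin_orthonormal,
    Nat.lt_succ_iff, specNorm, map_sub]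
  rfl

lemma singVal_mul_mul_transpose {a b c d : ℕ} {P : Matrix (Fin a) (Fin b) ℝ} (hP : Pᵀ * P = 1)
    (B : Matrix (Fin b) (Fin c) ℝ) {Q : Matrix (Fin d) (Fin c) ℝ} (hQ : Qᵀ * Q = 1) (i : ℕ) :
    singVal (P * B * Qᵀ) (i + 1) = singVal B (i + 1) := by
  have hnorm (x : EuclideanSpace ℝ (Fin d)) :
      ‖toEuclideanLin (P * B * Qᵀ) x‖ = ‖toEuclideanLin B (toEuclideanLin Qᵀ x)‖ := by
    rw [toLpLin_mul_same, toLpLin_mul_same, LinearMap.comp_apply, LinearMap.comp_apply,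
      norm_toEuclideanLin_of_transpose_mul_self hP]
  simp only [singVal_succ_eq_singularValues]
  apply le_antisymm
  · exact singularValues_le_of_norm_apply_le (norm_toEuclideanLin_transpose_le hQ)
      (fun x => (hnorm x).le) i
  · refine singularValues_le_of_norm_apply_le
      (fun x => (norm_toEuclideanLin_of_transpose_mul_self hQ x).le) (fun x => ?_) i
    have hQx : toEuclideanLin Qᵀ (toEuclideanLin Q x) = x := by
      rw [← LinearMap.comp_apply, ← toLpLin_mul_same, hQ, toLpLin_one, LinearMap.id_apply]
    rw [hnorm, hQx]

end EuclideanMatrices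

section UnreducedHessenberg

variable {R : Type*} {k : ℕ}

/-- A `(k + 1) × k` matrix is *unreduced upper Hessenberg* if it vanishes below its subdiagonal and
all its subdiagonal entries, the last row included, are nonzero. -/
structure UnreducedHessenberg [Zero R] (M : Matrix (Fin (k + 1)) (Fin k) R) : Prop where
  eq_zero_of_succ_lt : ∀ ⦃i : Fin (k + 1)⦄ ⦃j : Fin k⦄, j.succ < i → M i j = 0
  succ_ne_zero : ∀ j : Fin k, M j.succ j ≠ 0

lemma UnreducedHessenberg.eq_zero_of_mulVec [NonUnitalNonAssocSemiring R] [NoZeroDivisors R]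
    {M : Matrix (Fin (k + 1)) (Fin k) R} (hM : UnreducedHessenberg M) {μ : R} {x : Fin k → R}
    (hx : ∀ j : Fin k, (M *ᵥ x) j.castSucc = μ * x j) (hlast : (M *ᵥ x) (Fin.last k) = 0) :
    x = 0 := by
  funext j
  induction j using WellFoundedGT.induction with
  | ind j ih =>
    have hrow : (M *ᵥ x) j.succ = M j.succ j * x j := by
      rw [mulVec, dotProduct]
      refine Finset.sum_eq_single j (fun l _ hlj => ?_) (fun hj => absurd (Finset.mem_univ j) hj)
      rcases lt_or_gt_of_ne hlj with hl | hl
      · rw [hM.eq_zero_of_succ_lt (Fin.succ_lt_succ_iff.2 hl), zero_mul]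
      · rw [ih l hl, Pi.zero_apply, mul_zero]
    have hrow_zero : (M *ᵥ x) j.succ = 0 := by
      rcases Fin.eq_castSucc_or_eq_last j.succ with ⟨l, hl⟩ | hl
      · have hjl : j < l := by
          rw [← Fin.castSucc_lt_castSucc_iff, ← hl]
          exact Fin.castSucc_lt_succ
        rw [hl, hx, ih l hjl, Pi.zero_apply, mul_zero]
      · rw [hl, hlast]
    exact (mul_eq_zero.1 (hrow.symm.trans hrow_zero)).resolve_left (hM.succ_ne_zero j)

end UnreducedHessenberg

section GramMatrices

variable {m n k : ℕ}

lemma norm_sq_toEuclideanLin_eq_add_sq_last {l : ℕ} {M : Matrix (Fin (k + 1)) (Fin l) ℝ}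
    {G : Matrix (Fin k) (Fin l) ℝ} (hM : ∀ i j, M i.castSucc j = G i j)
    (x : EuclideanSpace ℝ (Fin l)) :
    ‖toEuclideanLin M x‖ ^ 2 = ‖toEuclideanLin G x‖ ^ 2 + (M *ᵥ x) (Fin.last k) ^ 2 := by
  have hrow (i : Fin k) : (M *ᵥ x) i.castSucc = (G *ᵥ x) i := by
    simp only [mulVec, dotProduct, hM]
  simp only [EuclideanSpace.real_norm_sq_eq, toLpLin_apply, Fin.sum_univ_castSucc, hrow]

theorem sq_singVal_lt_singVal_of_castSucc_eq_gram {C : Matrix (Fin m) (Fin k) ℝ}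
    {M : Matrix (Fin (k + 1)) (Fin k) ℝ} (hM : UnreducedHessenberg M)
    (hC : ∀ i j, M i.castSucc j = (Cᵀ * C) i j) (i : Fin k) :
    singVal C (i + 1) ^ 2 < singVal M (i + 1) := by
  have hnorm := norm_sq_toEuclideanLin_eq_add_sq_last hC
  simp only [singVal_succ_eq_singularValues]
  refine sq_singularValues_lt_singularValues (fun x => ?_) (fun μ x hx hMx => ?_) (by simp)
  · rw [adjoint_toEuclideanLin_apply]
    refine le_of_sq_le_sq ?_ (norm_nonneg _)
    rw [hnorm]
    exact le_add_of_nonneg_right (sq_nonneg _)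
  · rw [adjoint_toEuclideanLin_apply] at hx hMx
    have hlast : (M *ᵥ x) (Fin.last k) = 0 := by
      rw [← sq_nonpos_iff]
      linarith [hnorm x, pow_le_pow_left₀ (norm_nonneg _) hMx 2]
    refine WithLp.ofLp_injective 2 (hM.eq_zero_of_mulVec (μ := μ) (fun j => ?_) hlast)
    calc (M *ᵥ x) j.castSucc = ((Cᵀ * C) *ᵥ x) j := by simp only [mulVec, dotProduct, hC]
      _ = μ * x j := congrArg (· j) hx

/-- The `n × k` matrix of the first `k` columns of the identity, which embeds `ℝᵏ` into `ℝⁿ` by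
appending zeros. -/
def zeroPadding (hk : k ≤ n) : Matrix (Fin n) (Fin k) ℝ :=
  colSub 1 k hk

lemma mul_zeroPadding (A : Matrix (Fin m) (Fin n) ℝ) (hk : k ≤ n) :
    A * zeroPadding hk = colSub A k hk := by
  ext i j
  simp [zeroPadding, colSub, mul_apply, one_apply]

lemma transpose_zeroPadding_mul_self (hk : k ≤ n) : (zeroPadding hk)ᵀ * zeroPadding hk = 1 := by
  rw [mul_zeroPadding]
  ext i j
  simp [zeroPadding, colSub, one_apply, Fin.ext_iff]

lemma zeroPadding_mulVec_apply (hk : k ≤ n) (x : Fin k → ℝ) (i : Fin n) :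
    (zeroPadding hk *ᵥ x) i = if h : i < k then x ⟨i, h⟩ else 0 := by
  have hentry (j : Fin k) : zeroPadding hk i j = if (i : ℕ) = j then 1 else 0 := by
    simp only [zeroPadding, colSub, submatrix_apply, id, one_apply, Fin.ext_iff]
  simp only [mulVec, dotProduct, hentry, ite_mul, one_mul, zero_mul]
  split_ifs with h
  · have hval (j : Fin k) : (i : ℕ) = j ↔ (⟨i, h⟩ : Fin k) = j :=
      (Fin.ext_iff (a := ⟨i, h⟩)).symm
    simp only [hval, Fintype.sum_ite_eq]
  · exact Finset.sum_eq_zero fun j _ => if_neg fun hij : (i : ℕ) = j => h (hij ▸ j.is_lt)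

lemma subUL_apply (G : Matrix (Fin m) (Fin n) ℝ) {r c : ℕ} (hr : r ≤ m) (hc : c ≤ n) (i : Fin r)
    (j : Fin c) : subUL G r c hr hc i j = G (i.castLE hr) (j.castLE hc) :=
  rfl

lemma subUL_mulVec (G : Matrix (Fin m) (Fin n) ℝ) {r : ℕ} (hr : r ≤ m) (hk : k ≤ n)
    (x : Fin k → ℝ) (i : Fin r) :
    (subUL G r k hr hk *ᵥ x) i = (G *ᵥ (zeroPadding hk *ᵥ x)) (i.castLE hr) := by
  rw [mulVec_mulVec, mul_zeroPadding]
  rfl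

lemma norm_toEuclideanLin_subUL_le (G : Matrix (Fin m) (Fin n) ℝ) {r : ℕ} (hr : r ≤ m)
    (hk : k ≤ n) (x : EuclideanSpace ℝ (Fin k)) :
    ‖toEuclideanLin (subUL G r k hr hk) x‖ ≤
      ‖toEuclideanLin G (toEuclideanLin (zeroPadding hk) x)‖ := by
  refine le_of_sq_le_sq ?_ (norm_nonneg _)
  simp only [EuclideanSpace.real_norm_sq_eq, toLpLin_apply, subUL_mulVec]
  exact (Finset.sum_map Finset.univ (Fin.castLEEmb hr) fun i => _).symm.trans_le
    (Finset.sum_le_univ_sum_of_nonneg fun i => sq_nonneg _)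

theorem singVal_subUL_gram_lt_sq_singVal (A : Matrix (Fin m) (Fin n) ℝ) (hk : k < n)
    (hM : UnreducedHessenberg (subUL (Aᵀ * A) (k + 1) k hk hk.le)) (i : Fin k) :
    singVal (subUL (Aᵀ * A) (k + 1) k hk hk.le) (i + 1) < singVal A (i + 1) ^ 2 := by
  simp only [singVal_succ_eq_singularValues]
  have hpad := norm_toEuclideanLin_of_transpose_mul_self (transpose_zeroPadding_mul_self hk.le)
  refine singularValues_lt_sq_singularValues (J := toEuclideanLin (zeroPadding hk.le))
    (fun x => (hpad x).le)
    (fun x => ?_) (fun μ x hx => ?_) (by simp)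
  · rw [adjoint_toEuclideanLin_apply]
    exact norm_toEuclideanLin_subUL_le _ _ _ x
  · rw [adjoint_toEuclideanLin_apply] at hx
    have hrow (r : Fin (k + 1)) : (subUL (Aᵀ * A) (k + 1) k hk hk.le *ᵥ x) r =
        μ * if h : (r : ℕ) < k then x ⟨r, h⟩ else 0 := by
      rw [subUL_mulVec, ← Fin.val_castLE hk r, ← zeroPadding_mulVec_apply hk.le]
      exact congrArg (· (r.castLE hk)) hx
    refine WithLp.ofLp_injective 2 (hM.eq_zero_of_mulVec (μ := μ) (fun j => ?_) ?_)
    · rw [hrow, dif_pos (show (j.castSucc : ℕ) < k from j.is_lt)]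
      rfl
    · rw [hrow, dif_neg (show ¬ (Fin.last k : ℕ) < k from lt_irrefl k), mul_zero]

end GramMatrices

section LowerBidiagonal

variable {R : Type*} {n : ℕ}

/-- The `(n + 1) × n` lower bidiagonal matrix with diagonal `α` and subdiagonal `β`; the
zero-based `α j` and `β j` are the paper's `α_{j+1}` and `β_{j+2}`. -/
def lowerBidiagonal [Zero R] (α β : Fin n → R) : Matrix (Fin (n + 1)) (Fin n) R :=
  of fun i j => if (i : ℕ) = j then α j else if (i : ℕ) = j + 1 then β j else 0

lemma transpose_lowerBidiagonal_mul_apply [NonUnitalNonAssocSemiring R] {ι : Type*}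
    (α β : Fin n → R) (X : Matrix (Fin (n + 1)) ι R) (i : Fin n)
    (l : ι) :
    ((lowerBidiagonal α β)ᵀ * X) i l = α i * X i.castSucc l + β i * X i.succ l := by
  rw [mul_apply, Fintype.sum_eq_add i.castSucc i.succ Fin.castSucc_lt_succ.ne]
  · simp [lowerBidiagonal]
  · rintro r ⟨hr, hr'⟩
    have hdiag : (r : ℕ) ≠ i := Fin.val_ne_of_ne hr
    have hsub : (r : ℕ) ≠ i + 1 := Fin.val_ne_of_ne hr'
    simp [lowerBidiagonal, hdiag, hsub]

lemma gram_lowerBidiagonal_apply_of_lt [NonUnitalNonAssocSemiring R] (α β : Fin n → R) {i j : Fin n}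
    (hji : j < i) :
    ((lowerBidiagonal α β)ᵀ * lowerBidiagonal α β) i j =
      if (i : ℕ) = j + 1 then α i * β j else 0 := by
  have hne : (i : ℕ) ≠ j := Fin.val_ne_of_ne hji.ne'
  rw [transpose_lowerBidiagonal_mul_apply]
  have hsucc : (i : ℕ) + 1 ≠ j := by omega
  simp [lowerBidiagonal, hne, hsucc]

variable {k : ℕ} (α β : Fin n → ℝ) (hk : k < n)

lemma subUL_lowerBidiagonal :
    subUL (lowerBidiagonal α β) (k + 1) k (Nat.succ_le_succ hk.le) hk.le =
      lowerBidiagonal (α ∘ Fin.castLE hk.le) (β ∘ Fin.castLE hk.le) :=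
  rfl

lemma subUL_gram_lowerBidiagonal_castSucc (i j : Fin k) :
    subUL ((lowerBidiagonal α β)ᵀ * lowerBidiagonal α β) (k + 1) k hk hk.le i.castSucc j =
      ((subUL (lowerBidiagonal α β) (k + 1) k (Nat.succ_le_succ hk.le) hk.le)ᵀ *
        subUL (lowerBidiagonal α β) (k + 1) k (Nat.succ_le_succ hk.le) hk.le) i j := by
  rw [subUL_apply, subUL_lowerBidiagonal α β hk, transpose_lowerBidiagonal_mul_apply,
    transpose_lowerBidiagonal_mul_apply]
  rfl

lemma subUL_gram_lowerBidiagonal_apply (i : Fin (k + 1)) (j : Fin k) :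
    subUL ((lowerBidiagonal α β)ᵀ * lowerBidiagonal α β) (k + 1) k hk hk.le i j =
      if h : (i : ℕ) < k then
        ((subUL (lowerBidiagonal α β) (k + 1) k (Nat.succ_le_succ hk.le) hk.le)ᵀ *
          subUL (lowerBidiagonal α β) (k + 1) k (Nat.succ_le_succ hk.le) hk.le) ⟨i, h⟩ j
      else if (j : ℕ) = k - 1 then
        lowerBidiagonal α β ⟨k, by omega⟩ ⟨k, by omega⟩ *
          lowerBidiagonal α β ⟨k, by omega⟩ ⟨k - 1, by omega⟩
      else 0 := by
  split_ifs with hi hj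
  · exact subUL_gram_lowerBidiagonal_castSucc α β hk ⟨i, hi⟩ j
  all_goals
    have hji : j.castLE hk.le < i.castLE hk := j.is_lt.trans_le (not_lt.1 hi)
    have hik : (i : ℕ) = k := by omega
    rw [subUL_apply, gram_lowerBidiagonal_apply_of_lt α β hji]
  · have hi' : i.castLE hk = ⟨k, by omega⟩ := Fin.ext hik
    have hj' : j.castLE hk.le = ⟨k - 1, by omega⟩ := Fin.ext hj
    have hk0 : k ≠ k - 1 := by omega
    have hk1 : k - 1 + 1 = k := by omega
    simp only [hi', hj', hk1, hk0, lowerBidiagonal, of_apply, if_true, if_false]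
  · exact if_neg fun h : (i : ℕ) = j + 1 => hj (by omega)

lemma unreducedHessenberg_subUL_gram_lowerBidiagonal
    (hαβ : ∀ j : Fin k, α (j.succ.castLE hk) * β (j.castLE hk.le) ≠ 0) :
    UnreducedHessenberg
      (subUL ((lowerBidiagonal α β)ᵀ * lowerBidiagonal α β) (k + 1) k hk hk.le) where
  eq_zero_of_succ_lt i j hij := by
    have hlt : (j : ℕ) + 1 < i := hij
    have hji : j.castLE hk.le < i.castLE hk := Nat.lt_of_succ_lt hlt
    rw [subUL_apply, gram_lowerBidiagonal_apply_of_lt α β hji]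
    exact if_neg hlt.ne'
  succ_ne_zero j := by
    have hlt : j.castLE hk.le < j.succ.castLE hk := Nat.lt_succ_self j
    rw [subUL_apply, gram_lowerBidiagonal_apply_of_lt α β hlt]
    exact (if_pos rfl).trans_ne (hαβ j)

end LowerBidiagonal

theorem lsmr_singularValues_between_lsqr_and_A_general {m d n k : ℕ}
    {A : Matrix (Fin m) (Fin d) ℝ}
    {P : Matrix (Fin m) (Fin (n + 1)) ℝ} (hP : Pᵀ * P = 1)
    {Q : Matrix (Fin d) (Fin n) ℝ} (hQ : Qᵀ * Q = 1)
    {α β : Fin n → ℝ} {B : Matrix (Fin (n + 1)) (Fin n) ℝ}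
    (hB : ∀ (i : Fin (n + 1)) (j : Fin n),
      B i j = if (i : ℕ) = (j : ℕ) then α j else if (i : ℕ) = (j : ℕ) + 1 then β j else 0)
    (hA : A = P * B * Qᵀ) (hk : k < n)
    (hαβ : ∀ j : Fin k, α (j.succ.castLE hk) * β (j.castLE hk.le) ≠ 0)
    {Mk : Matrix (Fin (k + 1)) (Fin k) ℝ}
    (hMk : ∀ (i : Fin (k + 1)) (j : Fin k),
      Mk i j = if h : (i : ℕ) < k then
          ((subUL B (k + 1) k (by omega) (by omega))ᵀ *
            subUL B (k + 1) k (by omega) (by omega)) ⟨(i : ℕ), h⟩ j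
        else if (j : ℕ) = k - 1 then
          B ⟨k, by omega⟩ ⟨k, by omega⟩ * B ⟨k, by omega⟩ ⟨k - 1, by omega⟩
        else 0)
    (i : Fin k) :
    singVal (subUL B (k + 1) k (by omega) (by omega)) (i + 1) < √(singVal Mk (i + 1)) ∧
      √(singVal Mk (i + 1)) < singVal A (i + 1) := by
  obtain rfl : B = lowerBidiagonal α β := Matrix.ext hB
  obtain rfl : Mk = subUL _ (k + 1) k hk hk.le :=
    Matrix.ext fun r s => (hMk r s).trans (subUL_gram_lowerBidiagonal_apply α β hk r s).symm
  have hHess := unreducedHessenberg_subUL_gram_lowerBidiagonal α β hk hαβ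
  have hlower :=
    sq_singVal_lt_singVal_of_castSucc_eq_gram hHess (subUL_gram_lowerBidiagonal_castSucc α β hk) i
  have hupper := singVal_subUL_gram_lt_sq_singVal (lowerBidiagonal α β) hk hHess i
  have hnonneg : 0 ≤ singVal (lowerBidiagonal α β) (i + 1) := by
    rw [singVal_succ_eq_singularValues]
    exact LinearMap.singularValues_nonneg _ _
  rw [hA, singVal_mul_mul_transpose hP _ hQ]
  exact ⟨Real.lt_sqrt_of_sq_lt hlower,
    (Real.sqrt_lt_sqrt ((sq_nonneg _).trans hlower.le) hupper).trans_eq (Real.sqrt_sq hnonneg)⟩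

/-- the square roots `θ̃_i^{(k)}` of the singular values of the `(k+1) × k`
matrix `M_k = (B_kᵀB_k; α_{k+1}β_{k+1}(e_k)ᵀ)` satisfy `θ_i^{(k)} < θ̃_i^{(k)} < σ_i`. -/
theorem lsmr_singularValues_between_lsqr_and_A
    (m n : ℕ) (hn : 2 ≤ n) (hmn : n < m)
    (A : Matrix (Fin m) (Fin n) ℝ)
    (P : Matrix (Fin m) (Fin (n + 1)) ℝ) (hP : Pᵀ * P = 1)
    (Q : Matrix (Fin n) (Fin n) ℝ) (hQ : Qᵀ * Q = 1)
    (α : Fin n → ℝ) (hα : ∀ i, 0 < α i)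
    (β : Fin n → ℝ) (hβ : ∀ i, 0 < β i)
    (B : Matrix (Fin (n + 1)) (Fin n) ℝ)
    (hB : ∀ (i : Fin (n + 1)) (j : Fin n),
      B i j = if (i : ℕ) = (j : ℕ) then α j
        else if (i : ℕ) = (j : ℕ) + 1 then β j else 0)
    (hA : A = P * B * Qᵀ)
    (σ : Fin n → ℝ) (hσpos : ∀ i, 0 < σ i)
    (hσstrict : ∀ i j : Fin n, i < j → σ j < σ i)
    (hσ : ∀ i : Fin n, σ i = singVal A ((i : ℕ) + 1))
    (k : ℕ) (hk1 : 1 ≤ k) (hk2 : k ≤ n - 1)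
    (Mk : Matrix (Fin (k + 1)) (Fin k) ℝ)
    (hMk : ∀ (i : Fin (k + 1)) (j : Fin k),
      Mk i j = if h : (i : ℕ) < k then
          ((subUL B (k + 1) k (by omega) (by omega))ᵀ *
            subUL B (k + 1) k (by omega) (by omega)) ⟨(i : ℕ), h⟩ j
        else if (j : ℕ) = k - 1 then
          B ⟨k, by omega⟩ ⟨k, by omega⟩ * B ⟨k, by omega⟩ ⟨k - 1, by omega⟩
        else 0)
    :
    ∀ i : Fin k,
      singVal (subUL B (k + 1) k (by omega) (by omega)) ((i : ℕ) + 1) <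
          Real.sqrt (singVal Mk ((i : ℕ) + 1)) ∧
        Real.sqrt (singVal Mk ((i : ℕ) + 1)) < σ ⟨(i : ℕ), by have := i.2; omega⟩ := by
  simpa only [hσ] using lsmr_singularValues_between_lsqr_and_A_general hP hQ hB hA (by omega)
    (fun j => mul_ne_zero (hα _).ne' (hβ _).ne') hMk
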